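/- Let q = r^2 with r an odd prime power. Suppose q − 1 = e_1 f_1 = e_2 f_2, there exists an integer l ≥ 2 with e_1 ≡ 2^l (mod 2^{l+1}) and 2^l | e_2, and that 2e_2 | e_1(r+1) and e_1 | e_2(r−1). Let s, t be integers with 1 ≤ s ≤ D_1 and 1 ≤ t ≤ D_2, and set n_1 = s·f_1 + t·f_2. If the integer t·e_1(r+1)/(2e_2) + t(r+1)/2 is even, 4 | (t−1)(r+1), and n_1 is odd, then there exists an MDS self-dual code over F_q of length n_1 + 1, i.e., a linear code C ⊆ F_q^{n_1+1} with C = C⊥, dim C = (n_1+1)/2, and minimum Hamming distance (n_1+1)/2 + 1. -/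

import Mathlib

/-- The Euclidean dual of a linear code `C ⊆ F^n`. -/
def dualCode {F : Type*} [Field F] {n : ℕ} (C : Submodule F (Fin n → F)) :
    Submodule F (Fin n → F) where
  carrier := {x | ∀ c ∈ C, ∑ i, x i * c i = 0}
  add_mem' := by
    intro a b ha hb c hc
    simp only [Set.mem_setOf_eq] at ha hb ⊢
    simp [Pi.add_apply, add_mul, Finset.sum_add_distrib, ha c hc, hb c hc]
  zero_mem' := by intro c hc; simp
  smul_mem' := by
    intro r a ha c hc
    simp only [Set.mem_setOf_eq] at ha ⊢
    simp [Pi.smul_apply, smul_eq_mul, mul_assoc, ← Finset.mul_sum, ha c hc]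

/-- `C` has minimum Hamming distance `d`. -/
def IsMinDist {F : Type*} [Field F] [DecidableEq F] {n : ℕ}
    (C : Submodule F (Fin n → F)) (d : ℕ) : Prop :=
  (∀ c ∈ C, c ≠ 0 → d ≤ hammingNorm c) ∧ ∃ c ∈ C, c ≠ 0 ∧ hammingNorm c = d

open Polynomial in
theorem code_of_points {F : Type*} [Field F] [DecidableEq F] (n m : ℕ) (hn : n = 2 * m + 1)
    (a : Fin n → F) (ha : Function.Injective a)
    (hsq : ∀ i, IsSquare (-∏ j ∈ Finset.univ.erase i, (a i - a j))) :
    ∃ C : Submodule F (Fin (n + 1) → F),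
      dualCode C = C ∧ Module.finrank F C = m + 1 ∧ IsMinDist C (m + 1 + 1) := by
  have hne : ∀ i, (∏ j ∈ Finset.univ.erase i, (a i - a j)) ≠ 0 := by
    intro i
    refine Finset.prod_ne_zero_iff.2 fun j hj => ?_
    rw [sub_ne_zero]
    intro h
    exact (Finset.mem_erase.1 hj).1 (ha h).symm
  choose w hw using hsq
  have hw0 : ∀ i, w i ≠ 0 := by
    intro i h
    apply hne i
    have := hw i
    rw [h, mul_zero, neg_eq_zero] at this
    exact this
  let E : F[X] →ₗ[F] (Fin (n + 1) → F) :=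
    { toFun := fun f => Fin.snoc (α := fun _ => F) (fun i => (w i)⁻¹ * f.eval (a i)) (f.coeff m)
      map_add' := by
        intro f g
        ext i
        refine Fin.lastCases ?_ (fun i => ?_) i <;> simp [mul_add]
      map_smul' := by
        intro c f
        ext i
        refine Fin.lastCases ?_ (fun i => ?_) i <;> simp [mul_left_comm] }
  have E1 : ∀ f (i : Fin n), E f i.castSucc = (w i)⁻¹ * f.eval (a i) := by
    intro f i; simp [E]
  have E2 : ∀ f, E f (Fin.last n) = f.coeff m := by
    intro f; simp [E]
  have hdeg : ∀ f : F[X], f ∈ degreeLT F (m + 1) ↔ f.degree < ((m + 1 : ℕ) : WithBot ℕ) :=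
    fun f => mem_degreeLT
  -- weight lower bound
  have hwt : ∀ f : F[X], f.degree < ((m + 1 : ℕ) : WithBot ℕ) → f ≠ 0 →
      m + 1 + 1 ≤ hammingNorm (E f) := by
    intro f hf hf0
    have hnd : f.natDegree < m + 1 := (natDegree_lt_iff_degree_lt hf0).2 hf
    have hz : (Finset.univ.filter (fun i : Fin n => f.eval (a i) = 0)).card ≤ f.natDegree := by
      rw [← Finset.card_image_of_injective _ ha]
      refine card_le_degree_of_subset_roots (p := f) ?_
      intro x hx
      simp only [Finset.mem_val, Finset.mem_image, Finset.mem_filter, Finset.mem_univ,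
        true_and] at hx
      obtain ⟨i, hi, rfl⟩ := hx
      exact (mem_roots hf0).2 hi
    have hc : (Finset.univ.filter (fun i : Fin n => f.eval (a i) = 0)).card +
        (Finset.univ.filter (fun i : Fin n => ¬ f.eval (a i) = 0)).card = n := by
      rw [Finset.card_filter_add_card_filter_not]; simp
    have hN : hammingNorm (E f) = (Finset.univ.filter (fun i : Fin n => ¬ f.eval (a i) = 0)).card +
        if f.coeff m ≠ 0 then 1 else 0 := by
      unfold hammingNorm
      rw [Finset.card_filter, Fin.sum_univ_castSucc, E2, Finset.card_filter]
      congr 1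
      refine Finset.sum_congr rfl fun i _ => ?_
      rw [E1]
      simp [hw0 i]
    rw [hN]
    split_ifs with h
    · omega
    · have : f.natDegree ≠ m := by
        intro h'
        apply h
        rw [← h']
        exact (leadingCoeff_ne_zero.2 hf0)
      omega
  let C := LinearMap.range (E.domRestrict (degreeLT F (m + 1)))
  have hC : ∀ c, c ∈ C ↔ ∃ f : F[X], f.degree < ((m + 1 : ℕ) : WithBot ℕ) ∧ E f = c := by
    intro c
    simp only [C, LinearMap.mem_range, Subtype.exists, LinearMap.domRestrict_apply, hdeg]
    constructor
    · rintro ⟨f, h1, h2⟩; exact ⟨f, h1, h2⟩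
    · rintro ⟨f, h1, h2⟩; exact ⟨f, h1, h2⟩
  have hinj : Function.Injective (E.domRestrict (degreeLT F (m + 1))) := by
    rw [← LinearMap.ker_eq_bot, LinearMap.ker_eq_bot']
    rintro ⟨f, hf⟩ h
    by_contra h0
    have h0' : f ≠ 0 := fun h => h0 (Subtype.ext h)
    have := hwt f ((hdeg f).1 hf) h0'
    rw [LinearMap.domRestrict_apply] at h
    simp only at h
    rw [h] at this
    simp at this
  have hrank : Module.finrank F C = m + 1 := by
    rw [LinearMap.finrank_range_of_inj hinj, (degreeLTEquiv F (m + 1)).finrank_eq]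
    simp
  have hortho : C ≤ dualCode C := by
    intro x hx c hc
    obtain ⟨f, hf, rfl⟩ := (hC x).1 hx
    obtain ⟨g, hg, rfl⟩ := (hC c).1 hc
    have hfn : f.natDegree ≤ m := by
      by_cases h0 : f = 0
      · simp [h0]
      · exact Nat.lt_succ_iff.1 ((natDegree_lt_iff_degree_lt h0).2 hf)
    have hgn : g.natDegree ≤ m := by
      by_cases h0 : g = 0
      · simp [h0]
      · exact Nat.lt_succ_iff.1 ((natDegree_lt_iff_degree_lt h0).2 hg)
    have hdfg : (f * g).degree < (Finset.univ : Finset (Fin n)).card := by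
      refine lt_of_le_of_lt degree_le_natDegree ?_
      have := natDegree_mul_le (p := f) (q := g)
      simp only [Finset.card_univ, Fintype.card_fin]
      exact_mod_cast (by omega : (f * g).natDegree < n)
    have hs := Lagrange.coeff_eq_sum (v := a) ha.injOn hdfg
    have e : (Finset.univ : Finset (Fin n)).card - 1 = m + m := by simp; omega
    rw [e, coeff_mul_add_eq_of_natDegree_le hfn hgn] at hs
    rw [Fin.sum_univ_castSucc, E2, E2, hs, ← Finset.sum_add_distrib]
    refine Finset.sum_eq_zero fun i _ => ?_
    rw [E1, E1, eval_mul]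
    have h1 := hw i
    have h2 := hw0 i
    have h3 : (∏ j ∈ Finset.univ.erase i, (a i - a j)) = - (w i * w i) := by rw [← h1, neg_neg]
    rw [h3]
    field_simp
    ring
  have hdual : Module.finrank F (dualCode C) = m + 1 := by
    let B : LinearMap.BilinForm F (Fin (n + 1) → F) := dotProductBilin F F
    have hB : B.Nondegenerate := by
      constructor
      · intro x hx
        exact dotProduct_eq_zero x hx
      · intro x hx
        refine dotProduct_eq_zero x fun y => ?_
        rw [dotProduct_comm]
        exact hx y
    have : dualCode C = B.orthogonal C := by
      ext x
      rw [LinearMap.BilinForm.mem_orthogonal_iff]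
      change (∀ c ∈ C, ∑ i, x i * c i = 0) ↔ ∀ c ∈ C, ∑ i, c i * x i = 0
      simp only [mul_comm]
    rw [this, LinearMap.BilinForm.finrank_orthogonal hB, hrank]
    simp
    omega
  refine ⟨C, ?_, hrank, ?_, ?_⟩
  · exact (Submodule.eq_of_le_of_finrank_eq hortho (by rw [hrank, hdual])).symm
  · intro c hc h0
    obtain ⟨f, hf, rfl⟩ := (hC c).1 hc
    exact hwt f hf (by rintro rfl; simp at h0)
  · obtain ⟨T, -, hT⟩ := Finset.exists_subset_card_eq
      (s := (Finset.univ : Finset (Fin n))) (n := m) (by simp; omega)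
    have hf0 : Lagrange.nodal T a ≠ 0 := Lagrange.nodal_ne_zero
    have hfd : (Lagrange.nodal T a).degree < ((m + 1 : ℕ) : WithBot ℕ) := by
      rw [Lagrange.degree_nodal, hT]; exact_mod_cast Nat.lt_succ_self m
    have hge := hwt _ hfd hf0
    refine ⟨E (Lagrange.nodal T a), (hC _).2 ⟨_, hfd, rfl⟩, ?_, ?_⟩
    · intro h
      rw [h] at hge
      simp at hge
    · refine le_antisymm ?_ hge
      have : (Finset.univ.filter (fun i => E (Lagrange.nodal T a) i ≠ 0)) ⊆
          (T.map Fin.castSuccEmb)ᶜ := by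
        intro i hi
        simp only [Finset.mem_compl, Finset.mem_map, not_exists, not_and]
        rintro j hj rfl
        rw [Finset.mem_filter] at hi
        apply hi.2
        rw [Fin.coe_castSuccEmb, E1, Lagrange.eval_nodal_at_node hj, mul_zero]
      have := Finset.card_le_card this
      rw [Finset.card_compl, Finset.card_map, hT, Fintype.card_fin] at this
      unfold hammingNorm
      omega

open Polynomial in
theorem code_of_poly {F : Type*} [Field F] [DecidableEq F] (n : ℕ) (hn : Odd n)
    (P : F[X]) (hP : P.Monic) (hd : P.natDegree = n) (hs : P.Splits)
    (h : ∀ x, P.eval x = 0 → P.derivative.eval x ≠ 0 ∧ IsSquare (-P.derivative.eval x)) :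
    ∃ C : Submodule F (Fin (n + 1) → F),
      dualCode C = C ∧ Module.finrank F C = (n + 1) / 2 ∧ IsMinDist C ((n + 1) / 2 + 1) := by
  obtain ⟨m, hm⟩ := hn
  have hnd : P.roots.Nodup := by
    rw [Multiset.nodup_iff_count_le_one]
    intro x
    rw [count_roots]
    by_contra hc
    push Not at hc
    rw [one_lt_rootMultiplicity_iff_isRoot hP.ne_zero] at hc
    exact (h x hc.1).1 hc.2
  have hcard : P.roots.toFinset.card = n := by
    rw [Multiset.toFinset_card_of_nodup hnd, ← hs.natDegree_eq_card_roots, hd]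
  let e := (P.roots.toFinset.equivFinOfCardEq hcard).symm
  let a : Fin n → F := fun i => (e i : F)
  have ha : Function.Injective a := Subtype.val_injective.comp e.injective
  have hnod : P = Lagrange.nodal Finset.univ a := by
    conv_lhs => rw [hs.eq_prod_roots_of_monic hP]
    rw [Lagrange.nodal_eq]
    have : ∏ i, (X - C (a i)) = ∏ x : P.roots.toFinset, (X - C (x : F)) :=
      Fintype.prod_equiv e _ _ (fun i => rfl)
    rw [this, Finset.prod_coe_sort P.roots.toFinset (fun x => X - C x)]
    unfold Finset.prod
    rw [Multiset.toFinset_val, hnd.dedup]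
  have hk : (n + 1) / 2 = m + 1 := by omega
  rw [hk]
  refine code_of_points n m hm a ha fun i => ?_
  have hr : P.eval (a i) = 0 := by
    rw [hnod]; exact Lagrange.eval_nodal_at_node (Finset.mem_univ i)
  have := (h _ hr).2
  rwa [hnod, Lagrange.eval_nodal_derivative_eval_node_eq (Finset.mem_univ i),
    Lagrange.eval_nodal] at this

theorem prim_pow {F : Type*} [Field F] {θ : F} {N : ℕ} (hθ : IsPrimitiveRoot θ N)
    {e f e' : ℕ} (he : 0 < e) (hf : 0 < f) (hN : N = e * f) :
    IsPrimitiveRoot (θ ^ (e' * f)) (e / Nat.gcd e e') := by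
  have hg : 0 < Nat.gcd e e' := Nat.gcd_pos_of_pos_left _ he
  obtain ⟨x, hx⟩ := Nat.gcd_dvd_left e e'
  obtain ⟨y, hy⟩ := Nat.gcd_dvd_right e e'
  have hcop := Nat.coprime_div_gcd_div_gcd hg
  set g := Nat.gcd e e' with hgdef
  have hx' : e / g = x := by rw [hx, Nat.mul_div_cancel_left _ hg]
  have hy' : e' / g = y := by rw [hy, Nat.mul_div_cancel_left _ hg]
  rw [hx', hy'] at hcop
  rw [hx']
  have key : ∀ k, (θ ^ (e' * f)) ^ k = 1 ↔ x ∣ k := by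
    intro k
    rw [← pow_mul, hθ.pow_eq_one_iff_dvd, hN]
    have h1 : e * f = (g * f) * x := by rw [hx]; ring
    have h2 : e' * f * k = (g * f) * (y * k) := by rw [hy]; ring
    rw [h1, h2, Nat.mul_dvd_mul_iff_left (by positivity)]
    exact hcop.dvd_mul_left
  exact ⟨(key x).2 dvd_rfl, fun k hk => (key k).1 hk⟩

theorem chi_sub {F : Type*} [Field F] {r h : ℕ} (hr : 1 ≤ r) (φ : F →+* F)
    (hφ : ∀ x, φ x = x ^ r) {μ ν ε : F}
    (hμ : μ ^ (r + 1) = 1) (hν : ν ^ (r + 1) = 1) (hε : (μ * ν) ^ h = ε) (hne : μ - ν ≠ 0) :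
    (μ - ν) ^ ((r - 1) * h) * ε = (-1) ^ h := by
  have h1 : (μ - ν) ^ (r - 1) * (μ * ν) = -1 := by
    apply mul_right_cancel₀ hne
    have e : (μ - ν) ^ (r - 1) * (μ - ν) = μ ^ r - ν ^ r := by
      rw [← pow_succ, Nat.sub_add_cancel hr, ← hφ, map_sub, hφ, hφ]
    rw [pow_succ] at hμ hν
    calc (μ - ν) ^ (r - 1) * (μ * ν) * (μ - ν)
        = ((μ - ν) ^ (r - 1) * (μ - ν)) * (μ * ν) := by ring
      _ = (μ ^ r * μ) * ν - (ν ^ r * ν) * μ := by rw [e]; ring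
      _ = -1 * (μ - ν) := by rw [hμ, hν]; ring
  rw [pow_mul, ← hε, ← mul_pow, h1]

open Polynomial in
theorem deriv_prod_eval {F : Type*} [Field F] (s : Finset ℕ) (p : ℕ → F[X]) (Q : F[X]) (x : F)
    (i : ℕ) (hi : i ∈ s) (hx : (p i).eval x = 0) :
    (derivative ((∏ k ∈ s, p k) * Q)).eval x =
      (derivative (p i)).eval x * (∏ k ∈ s.erase i, (p k).eval x) * Q.eval x := by
  rw [← Finset.mul_prod_erase s p hi, mul_assoc, derivative_mul, eval_add, eval_mul, eval_mul, eval_mul, hx,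
    eval_prod]
  ring

open Polynomial in
theorem splits_binom {F : Type*} [Field F] [Fintype F] {e f : ℕ}
    (hN : Fintype.card F = e * f + 1) (c : F) (hc : c ^ e = 1) :
    (X ^ f - C c : F[X]).Splits := by
  have hcard : 1 < Fintype.card F := Fintype.one_lt_card
  have h1 : (X ^ Fintype.card F - X : F[X]).Splits := by
    rw [splits_iff_card_roots, FiniteField.roots_X_pow_card_sub_X,
      FiniteField.X_pow_card_sub_X_natDegree_eq _ hcard]
    simp
  refine h1.of_dvd (FiniteField.X_pow_card_sub_X_ne_zero _ hcard) ?_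
  have h2 := sub_dvd_pow_sub_pow (X ^ f : F[X]) (C c) e
  rw [← C_pow, hc, C_1, ← pow_mul] at h2
  refine h2.trans ⟨X, ?_⟩
  rw [hN, mul_comm e f]; ring

open Polynomial in
theorem mds_core {F : Type*} [Field F] [Fintype F] [DecidableEq F]
    {r h e1 f1 e2 f2 s t d w : ℕ} (φ : F →+* F) (hφ : ∀ x, φ x = x ^ r)
    (hr1 : 1 < r) (hrh : r + 1 = 2 * h)
    (hF : Fintype.card F = r ^ 2)
    (hN1 : Fintype.card F = e1 * f1 + 1) (hN2 : Fintype.card F = e2 * f2 + 1)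
    (hf1 : 0 < f1) (hf2 : 0 < f2)
    (hd : e1 = 2 * d) (hdev : Even d) (he2 : Even e2)
    (heven : Even (t * w + t * h)) (h4 : Even ((t - 1) * h))
    {θ b u ω : F} (hθ : IsPrimitiveRoot θ (e1 * f1))
    (hb : b = θ ^ (e2 * f1)) (hu : u = θ ^ (e1 * f2)) (hω : ω = θ ^ (d * f2))
    (hbr : b ^ r = b) (hbinj : ∀ i < s, ∀ j < s, b ^ i = b ^ j → i = j)
    (huinj : ∀ i < t, ∀ j < t, u ^ i = u ^ j → i = j)
    (hm1 : θ ^ (d * f1) = -1) (hneb : ∀ k i, - b ^ k ≠ b ^ i)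
    (huh : u ^ h = 1) (hωh : ω ^ h = (-1) ^ w) (hneu : ∀ k i, u ^ k ≠ ω * u ^ i)
    (hn1 : Odd (s * f1 + t * f2)) :
    ∃ C : Submodule F (Fin (s * f1 + t * f2 + 1) → F),
      dualCode C = C ∧
      Module.finrank F C = (s * f1 + t * f2 + 1) / 2 ∧
      IsMinDist C ((s * f1 + t * f2 + 1) / 2 + 1) := by
  set K := (r - 1) * h with hK
  have hNK : Fintype.card F = 2 * K + 1 := by
    obtain ⟨r', rfl⟩ : ∃ r', r = r' + 1 := ⟨r - 1, by omega⟩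
    have : 2 * K = r' * (2 * h) := by rw [hK]; simp; ring
    rw [hF, this, ← hrh]; ring
  have hK2 : Fintype.card F / 2 = K := by omega
  have hchar : ringChar F ≠ 2 := by
    rw [Ne, FiniteField.even_card_iff_char_two]; omega
  have hKev : Even K := by
    have : Even (r - 1) := ⟨h - 1, by omega⟩
    exact this.mul_right h
  have hθ0 : θ ≠ 0 := by
    refine hθ.ne_zero ?_
    have : 1 < Fintype.card F := Fintype.one_lt_card
    omega
  have hsq1 : ∀ x : F, x ≠ 0 → (x ^ 2) ^ K = 1 := by
    intro x hx
    have := FiniteField.pow_card_sub_one_eq_one x hx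
    rwa [hNK, Nat.add_sub_cancel, pow_mul] at this
  have hsub1 : ∀ x : F, x ≠ 0 → φ x = x → x ^ K = 1 := by
    intro x hx hh
    have : x ^ (r - 1) = 1 := by
      apply mul_right_cancel₀ hx
      rw [← pow_succ, Nat.sub_add_cancel hr1.le, one_mul, ← hφ, hh]
    rw [hK, pow_mul, this, one_pow]
  have hω2 : ω ^ 2 = u := by rw [hω, hu, hd, ← pow_mul]; congr 1; ring
  have hu1 : u ^ (r + 1) = 1 := by rw [hrh, mul_comm, pow_mul, huh, one_pow]
  have hω1 : ω ^ (r + 1) = 1 := by rw [hrh, pow_mul, hω2, huh]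
  have hui : ∀ i, (u ^ i) ^ (r + 1) = 1 := fun i => by rw [pow_right_comm, hu1, one_pow]
  have hωui : ∀ i, (ω * u ^ i) ^ (r + 1) = 1 := fun i => by rw [mul_pow, hω1, hui, one_mul]
  have hω0 : ω ≠ 0 := by rw [hω]; exact pow_ne_zero _ hθ0
  have hcastne : ∀ e f : ℕ, Fintype.card F = e * f + 1 → (f : F) ≠ 0 := by
    intro e f hef h0
    have := Nat.cast_card_eq_zero (R := F)
    rw [hef] at this
    push_cast at this
    rw [h0] at this
    simp at this
  have hφb : φ b = b := by rw [hφ, hbr]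
  have hp1 : ∀ e f : ℕ, IsPrimitiveRoot θ (e * f) → 0 < f → ∀ y : F, y ^ f = 1 → e * f ≠ 0 →
      ∃ k, y = (θ ^ e) ^ k := by
    intro e f hef hf y hy h0
    have : IsPrimitiveRoot (θ ^ e) f := hef.pow (by omega) rfl
    have : NeZero f := ⟨hf.ne'⟩
    obtain ⟨k, -, hk⟩ := IsPrimitiveRoot.eq_pow_of_pow_eq_one ‹IsPrimitiveRoot (θ ^ e) f› hy
    exact ⟨k, hk.symm⟩
  have hef : e1 * f1 = e2 * f2 := by omega
  have hef0 : e1 * f1 ≠ 0 := by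
    have : 1 < Fintype.card F := Fintype.one_lt_card
    omega
  have hone : θ ^ (e1 * f1) = 1 := hθ.pow_eq_one
  have hone2 : θ ^ (e2 * f2) = 1 := by rw [← hef, hone]
  obtain ⟨d', hd'⟩ := hdev
  obtain ⟨c', hc'⟩ := he2
  let p1 : ℕ → F[X] := fun i => X ^ f1 - C (b ^ i)
  let p2 : ℕ → F[X] := fun j => X ^ f2 - C (ω * u ^ j)
  have hbe : ∀ i, (b ^ i) ^ e1 = 1 := by
    intro i
    rw [hb, ← pow_mul, ← pow_mul, show e2 * f1 * (i * e1) = (e1 * f1) * (e2 * i) by ring, pow_mul,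
      hone, one_pow]
  have hue : ∀ i, (ω * u ^ i) ^ e2 = 1 := by
    intro i
    rw [hω, hu, ← pow_mul, ← pow_add, ← pow_mul,
      show (d * f2 + e1 * f2 * i) * e2 = (e2 * f2) * (d + e1 * i) by ring, pow_mul, hone2, one_pow]
  refine code_of_poly _ hn1 ((∏ i ∈ Finset.range s, p1 i) * ∏ j ∈ Finset.range t, p2 j)
    ?_ ?_ ?_ ?_
  · exact (monic_prod_of_monic _ _ fun i _ => monic_X_pow_sub_C _ hf1.ne').mul
      (monic_prod_of_monic _ _ fun i _ => monic_X_pow_sub_C _ hf2.ne')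
  · rw [Monic.natDegree_mul (monic_prod_of_monic _ _ fun i _ => monic_X_pow_sub_C _ hf1.ne')
      (monic_prod_of_monic _ _ fun i _ => monic_X_pow_sub_C _ hf2.ne'),
      natDegree_prod_of_monic _ _ (fun i _ => monic_X_pow_sub_C _ hf1.ne'),
      natDegree_prod_of_monic _ _ (fun i _ => monic_X_pow_sub_C _ hf2.ne')]
    simp only [p1, p2, natDegree_X_pow_sub_C, Finset.sum_const, Finset.card_range, smul_eq_mul]
  · exact (Splits.prod fun i _ => splits_binom hN1 _ (hbe i)).mul
      (Splits.prod fun i _ => splits_binom hN2 _ (hue i))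
  · -- the derivative
    have fin : ∀ z : F, z ≠ 0 → z ^ K = 1 → z ≠ 0 ∧ IsSquare (-z) := by
      intro z hz hzK
      refine ⟨hz, (FiniteField.isSquare_iff hchar (neg_ne_zero.2 hz)).2 ?_⟩
      rw [hK2, hKev.neg_pow, hzK]
    have fin2 : ∀ z : F, (z ^ K = 1) → z ≠ 0 := by
      intro z hz h0
      rw [h0, zero_pow] at hz
      · exact zero_ne_one hz
      · have : 1 < Fintype.card F := Fintype.one_lt_card
        omega
    intro x hx
    rw [eval_mul, mul_eq_zero, eval_prod, eval_prod, Finset.prod_eq_zero_iff,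
      Finset.prod_eq_zero_iff] at hx
    rcases hx with ⟨i, hi, hx⟩ | ⟨j, hj, hx⟩
    · rw [deriv_prod_eval _ _ _ _ i hi hx]
      have hxf : x ^ f1 = b ^ i := by simpa [p1, sub_eq_zero] using hx
      obtain ⟨k, hk⟩ := hp1 e1 f1 hθ hf1 (x / θ ^ (e2 * i)) (by
        rw [div_pow, hxf, hb, ← pow_mul, ← pow_mul, show e2 * i * f1 = e2 * f1 * i by ring,
          div_self (pow_ne_zero _ hθ0)]) hef0
      have hxe : x = θ ^ (e2 * i + e1 * k) := by
        rw [div_eq_iff (pow_ne_zero _ hθ0)] at hk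
        rw [hk, pow_add, pow_mul θ e1 k, mul_comm]
      have hx0 : x ≠ 0 := by rw [hxe]; exact pow_ne_zero _ hθ0
      have hxK : x ^ K = 1 := by
        rw [hxe, show e2 * i + e1 * k = (c' * i + d * k) * 2 by rw [hd, hc']; ring, pow_mul θ _ 2]
        exact hsq1 _ (pow_ne_zero _ hθ0)
      have hxf2 : x ^ f2 = u ^ k := by
        rw [hxe, hu, ← pow_mul, ← pow_mul,
          show (e2 * i + e1 * k) * f2 = (e2 * f2) * i + e1 * f2 * k by ring, pow_add,
          pow_mul θ (e2 * f2) i, hone2, one_pow, one_mul]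
      have A1 : ((derivative (p1 i)).eval x) ^ K = 1 := by
        simp only [p1, derivative_sub, derivative_X_pow, derivative_C, sub_zero, eval_mul,
          eval_pow, eval_X, eval_C]
        rw [mul_pow, pow_right_comm, hxK, one_pow, mul_one]
        exact hsub1 _ (hcastne _ _ hN1) (map_natCast _ _)
      have A2 : (∏ k ∈ (Finset.range s).erase i, (p1 k).eval x) ^ K = 1 := by
        rw [← Finset.prod_pow]
        refine Finset.prod_eq_one fun k hk => ?_
        rw [Finset.mem_erase, Finset.mem_range] at hk
        simp only [p1, eval_sub, eval_pow, eval_X, eval_C]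
        rw [hxf]
        refine hsub1 _ ?_ (by simp only [map_sub, map_pow, hφb])
        rw [sub_ne_zero]
        intro hh
        exact hk.1 (hbinj _ (Finset.mem_range.1 hi) _ hk.2 hh).symm
      have A3 : (eval x (∏ j ∈ Finset.range t, p2 j)) ^ K = 1 := by
        rw [eval_prod, ← Finset.prod_pow]
        have : ∀ j ∈ Finset.range t, (eval x (p2 j)) ^ K = (-1) ^ (w + h) := by
          intro j _
          simp only [p2, eval_sub, eval_pow, eval_X, eval_C]
          rw [hxf2]
          have := chi_sub (h := h) (ε := (-1) ^ w) hr1.le φ hφ (hui k) (hωui j) (by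
            rw [mul_pow, mul_pow, pow_right_comm, pow_right_comm u j, huh, hωh]; simp)
            (sub_ne_zero.2 (hneu k j))
          rw [pow_add, ← this, mul_comm ((-1) ^ w), mul_assoc, ← pow_add, Even.neg_one_pow ⟨w, rfl⟩, mul_one]
        rw [Finset.prod_congr rfl this, Finset.prod_const, Finset.card_range, ← pow_mul]
        apply Even.neg_one_pow
        convert heven using 1
        ring
      have A : ((derivative (p1 i)).eval x * (∏ k ∈ (Finset.range s).erase i, (p1 k).eval x) *
          eval x (∏ j ∈ Finset.range t, p2 j)) ^ K = 1 := by
        rw [mul_pow, mul_pow, A1, A2, A3]; simp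
      exact fin _ (fin2 _ A) A
    · rw [mul_comm (∏ i ∈ Finset.range s, p1 i), deriv_prod_eval _ _ _ _ j hj hx]
      have hxf : x ^ f2 = ω * u ^ j := by simpa [p2, sub_eq_zero] using hx
      obtain ⟨k, hk⟩ := hp1 e2 f2 (hef ▸ hθ) hf2 (x / θ ^ (d + e1 * j)) (by
        rw [div_pow, hxf, hω, hu, ← pow_mul, ← pow_mul, ← pow_add,
          show (d + e1 * j) * f2 = d * f2 + e1 * f2 * j by ring,
          div_self (pow_ne_zero _ hθ0)]) (hef ▸ hef0)
      have hxe : x = θ ^ (d + e1 * j + e2 * k) := by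
        rw [div_eq_iff (pow_ne_zero _ hθ0)] at hk
        rw [hk, pow_add θ (d + e1 * j), pow_mul θ e2 k, mul_comm]
      have hx0 : x ≠ 0 := by rw [hxe]; exact pow_ne_zero _ hθ0
      have hxK : x ^ K = 1 := by
        rw [hxe, show d + e1 * j + e2 * k = (d' + d * j + c' * k) * 2 by
          rw [hd, hc', hd']; ring, pow_mul θ _ 2]
        exact hsq1 _ (pow_ne_zero _ hθ0)
      have hxf2 : x ^ f1 = - b ^ k := by
        rw [hxe, hb, ← pow_mul, ← pow_mul,
          show (d + e1 * j + e2 * k) * f1 = d * f1 + ((e1 * f1) * j + e2 * f1 * k) by ring, pow_add,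
          pow_add, pow_mul θ (e1 * f1) j, hone, one_pow, one_mul, hm1, neg_one_mul]
      have A1 : ((derivative (p2 j)).eval x) ^ K = 1 := by
        simp only [p2, derivative_sub, derivative_X_pow, derivative_C, sub_zero, eval_mul,
          eval_pow, eval_X, eval_C]
        rw [mul_pow, pow_right_comm, hxK, one_pow, mul_one]
        exact hsub1 _ (hcastne _ _ hN2) (map_natCast _ _)
      have A2 : (∏ k ∈ (Finset.range t).erase j, (p2 k).eval x) ^ K = 1 := by
        rw [← Finset.prod_pow]
        have : ∀ i ∈ (Finset.range t).erase j, (eval x (p2 i)) ^ K = (-1) ^ h := by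
          intro i hi
          rw [Finset.mem_erase, Finset.mem_range] at hi
          simp only [p2, eval_sub, eval_pow, eval_X, eval_C]
          rw [hxf]
          have := chi_sub (h := h) (ε := 1) hr1.le φ hφ (hωui j) (hωui i) (by
            rw [show ω * u ^ j * (ω * u ^ i) = ω ^ 2 * u ^ j * u ^ i by ring, hω2, mul_pow, mul_pow,
              pow_right_comm, pow_right_comm u i, huh]; simp) (by
            rw [sub_ne_zero]
            intro hh
            exact hi.1 (huinj _ (Finset.mem_range.1 hj) _ hi.2 (mul_left_cancel₀ hω0 hh)).symm)
          rw [← this, mul_one]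
        rw [Finset.prod_congr rfl this, Finset.prod_const, Finset.card_erase_of_mem hj,
          Finset.card_range, ← pow_mul, mul_comm]
        exact h4.neg_one_pow
      have A3 : (eval x (∏ j ∈ Finset.range s, p1 j)) ^ K = 1 := by
        rw [eval_prod, ← Finset.prod_pow]
        refine Finset.prod_eq_one fun i _ => ?_
        simp only [p1, eval_sub, eval_pow, eval_X, eval_C]
        rw [hxf2]
        exact hsub1 _ (sub_ne_zero.2 (hneb k i)) (by simp only [map_sub, map_neg, map_pow, hφb])
      have A : ((derivative (p2 j)).eval x * (∏ k ∈ (Finset.range t).erase j, (p2 k).eval x) *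
          eval x (∏ j ∈ Finset.range s, p1 j)) ^ K = 1 := by
        rw [mul_pow, mul_pow, A1, A2, A3]; simp
      exact fin _ (fin2 _ A) A

/-- Theorem 3.3(2): if `(r+1)/2·(t·e₁/e₂ + t)` is even, `4 ∣ (t−1)(r+1)` and
`n₁ = s·f₁ + t·f₂` is odd, there is a `q`-ary MDS self-dual code of length `n₁ + 1`,
where `q = r²`. -/
theorem mds_self_dual_thm3_odd_length_succ
    (r e1 f1 e2 f2 s t l : ℕ)
    (hr_odd : Odd r) (hr_pp : IsPrimePow r)
    (hq1 : r ^ 2 - 1 = e1 * f1) (hq2 : r ^ 2 - 1 = e2 * f2)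
    (hl : 2 ≤ l) (he1 : e1 % 2 ^ (l + 1) = 2 ^ l) (he2 : 2 ^ l ∣ e2)
    (hdvd1 : 2 * e2 ∣ e1 * (r + 1)) (hdvd2 : e1 ∣ e2 * (r - 1))
    (hs1 : 1 ≤ s) (hs2 : s ≤ e1 / Nat.gcd e1 e2)
    (ht1 : 1 ≤ t) (ht2 : t ≤ e2 / Nat.gcd e1 e2)
    (heven : Even (t * e1 * (r + 1) / (2 * e2) + t * (r + 1) / 2))
    (h4 : 4 ∣ (t - 1) * (r + 1))
    (hn1 : Odd (s * f1 + t * f2))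
    (F : Type*) [Field F] [Fintype F] [DecidableEq F]
    (hF : Fintype.card F = r ^ 2) :
    ∃ C : Submodule F (Fin (s * f1 + t * f2 + 1) → F),
      dualCode C = C ∧
      Module.finrank F C = (s * f1 + t * f2 + 1) / 2 ∧
      IsMinDist C ((s * f1 + t * f2 + 1) / 2 + 1) := by
  have hr1 : 1 < r := hr_pp.one_lt
  have hr2 : 1 < r ^ 2 := Nat.one_lt_pow (by norm_num) hr1
  have hN1 : Fintype.card F = e1 * f1 + 1 := by omega
  have hN2 : Fintype.card F = e2 * f2 + 1 := by omega
  have hpos1 : 0 < e1 * f1 := by omega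
  have hpos2 : 0 < e2 * f2 := by omega
  have hef : e1 * f1 = e2 * f2 := by omega
  have he1p : 0 < e1 := Nat.pos_of_mul_pos_right hpos1
  have hf1p : 0 < f1 := Nat.pos_of_mul_pos_left hpos1
  have he2p : 0 < e2 := Nat.pos_of_mul_pos_right hpos2
  have hf2p : 0 < f2 := Nat.pos_of_mul_pos_left hpos2
  obtain ⟨h, hh⟩ : ∃ h, r + 1 = 2 * h := by
    obtain ⟨k, hk⟩ := hr_odd
    exact ⟨k + 1, by omega⟩
  obtain ⟨l', rfl⟩ : ∃ l', l = l' + 2 := ⟨l - 2, by omega⟩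
  -- e1 = 2 ^ l * o
  obtain ⟨o, ho, hoodd⟩ : ∃ o, e1 = 2 ^ (l' + 2) * o ∧ Odd o := by
    refine ⟨2 * (e1 / 2 ^ (l' + 2 + 1)) + 1, ?_, ⟨_, rfl⟩⟩
    conv_lhs => rw [← Nat.div_add_mod e1 (2 ^ (l' + 2 + 1)), he1]
    ring
  obtain ⟨c, hc⟩ := he2
  set d := 2 ^ (l' + 1) * o with hd
  have hd1 : e1 = 2 * d := by rw [ho, hd]; ring
  have hdev : Even d := ⟨2 ^ l' * o, by rw [hd]; ring⟩
  have he2ev : Even e2 := ⟨2 ^ (l' + 1) * c, by rw [hc]; ring⟩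
  obtain ⟨w, hw⟩ := hdvd1
  have hw2 : e2 * w = 2 * d * h := by
    rw [hh, hd1] at hw
    have : 2 * (e2 * w) = 2 * (2 * d * h) := by linarith
    omega
  have heven' : Even (t * w + t * h) := by
    have a1 : t * e1 * (r + 1) / (2 * e2) = t * w := by
      rw [mul_assoc, hw, show t * (2 * e2 * w) = (2 * e2) * (t * w) by ring,
        Nat.mul_div_cancel_left _ (by omega)]
    have a2 : t * (r + 1) / 2 = t * h := by
      rw [hh, show t * (2 * h) = 2 * (t * h) by ring, Nat.mul_div_cancel_left _ (by omega)]
    rwa [a1, a2] at heven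
  have h4' : Even ((t - 1) * h) := by
    obtain ⟨k, hk⟩ := h4
    rw [hh, show (t - 1) * (2 * h) = 2 * ((t - 1) * h) by ring] at hk
    exact ⟨k, by omega⟩
  -- Frobenius
  obtain ⟨φ, hφ⟩ : ∃ φ : F →+* F, ∀ x, φ x = x ^ r := by
    obtain ⟨p, hp⟩ := CharP.exists F
    obtain ⟨n, hprime, hcard⟩ := FiniteField.card F p
    have : Fact p.Prime := ⟨hprime⟩
    have hdv : r ∣ p ^ (n : ℕ) := by
      rw [← hcard, hF]; exact dvd_pow_self r (by norm_num)
    obtain ⟨m, -, hm⟩ := (Nat.dvd_prime_pow hprime).1 hdv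
    exact ⟨iterateFrobenius F p m, fun x => by rw [iterateFrobenius_def, hm]⟩
  -- primitive root
  obtain ⟨θ, hθ⟩ : ∃ θ : F, IsPrimitiveRoot θ (e1 * f1) := by
    obtain ⟨g, hg⟩ := IsCyclic.exists_generator (α := Fˣ)
    have : orderOf g = e1 * f1 := by
      rw [orderOf_eq_card_of_forall_mem_zpowers hg, Nat.card_units, Nat.card_eq_fintype_card, hN1]
      simp
    refine ⟨(g : F), ?_⟩
    rw [← this]
    exact (IsPrimitiveRoot.orderOf g).map_of_injective (f := Units.coeHom F) Units.val_injective
  have hθ2 : IsPrimitiveRoot θ (e2 * f2) := hef ▸ hθ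
  have hm1 : θ ^ (d * f1) = -1 :=
    (hθ.pow hpos1 (show e1 * f1 = d * f1 * 2 by rw [hd1]; ring)).eq_neg_one_of_two_right
  have hneg : (-1 : F) ≠ 1 := by
    have hchar : ringChar F ≠ 2 := by
      rw [Ne, FiniteField.even_card_iff_char_two, hF, ← Nat.even_iff, Nat.not_even_iff_odd]
      exact hr_odd.pow
    exact Ring.neg_one_ne_one_of_char_ne_two hchar
  refine mds_core (θ := θ) (b := θ ^ (e2 * f1)) (u := θ ^ (e1 * f2)) (ω := θ ^ (d * f2)) φ hφ hr1 hh
    hF hN1 hN2 hf1p hf2p hd1 hdev he2ev heven' h4' hθ rfl rfl rfl ?_ ?_ ?_ hm1 ?_ ?_ ?_ ?_ hn1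
  · have : (θ ^ (e2 * f1)) ^ (r - 1) = 1 := by
      rw [← pow_mul, hθ.pow_eq_one_iff_dvd, show e2 * f1 * (r - 1) = e2 * (r - 1) * f1 by ring]
      exact Nat.mul_dvd_mul_right hdvd2 f1
    conv_lhs => rw [← Nat.sub_add_cancel hr1.le, pow_succ, this, one_mul]
  · intro i hi j hj hij
    exact (prim_pow hθ he1p hf1p rfl).pow_inj (by omega) (by omega) hij
  · intro i hi j hj hij
    rw [Nat.gcd_comm] at ht2
    exact (prim_pow hθ2 he2p hf2p rfl).pow_inj (by omega) (by omega) hij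
  · intro k i hki
    have hbo : (θ ^ (e2 * f1)) ^ o = 1 := by
      rw [← pow_mul, hθ.pow_eq_one_iff_dvd, hc, ho]
      exact ⟨c, by ring⟩
    have := congrArg (fun z => z ^ o) hki
    beta_reduce at this
    rw [hoodd.neg_pow, pow_right_comm, pow_right_comm _ i, hbo, one_pow, one_pow] at this
    exact hneg this
  · rw [← pow_mul, hθ2.pow_eq_one_iff_dvd]
    exact ⟨w, by rw [hd1, show e2 * f2 * w = (e2 * w) * f2 by ring, hw2]; ring⟩
  · rw [← hm1, ← pow_mul, ← pow_mul]
    congr 1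
    have : 2 * (d * f2 * h) = 2 * (d * f1 * w) := by
      calc 2 * (d * f2 * h) = (2 * d * h) * f2 := by ring
        _ = (e2 * f2) * w := by rw [← hw2]; ring
        _ = 2 * (d * f1 * w) := by rw [← hef, hd1]; ring
    omega
  · intro k i hki
    have huc : (θ ^ (e1 * f2)) ^ c = 1 := by
      rw [← pow_mul, hθ2.pow_eq_one_iff_dvd, hc, ho]
      exact ⟨o, by ring⟩
    have hωc : (θ ^ (d * f2)) ^ c = -1 := by
      have : d * f2 * c = d * f1 * o := by
        have : 2 * (d * f2 * c) = 2 * (d * f1 * o) := by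
          calc 2 * (d * f2 * c) = (e2 * f2) * o := by rw [hd, hc]; ring
            _ = 2 * (d * f1 * o) := by rw [← hef, hd1]; ring
        omega
      rw [← pow_mul, this, pow_mul, hm1, hoodd.neg_one_pow]
    have := congrArg (fun z => z ^ c) hki
    beta_reduce at this
    rw [mul_pow, pow_right_comm, pow_right_comm _ i, huc, hωc, one_pow, one_pow, mul_one] at this
    exact hneg this.symm
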